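/- Let G be a graph on n vertices with adjacency matrix A over ℝ, and let H be a graph on m vertices with adjacency matrix B over ℝ. Let q_G(x) = det(A - x·I_n) be the characteristic polynomial of A. Then the determinant of the adjacency matrix of the box product G □ H equals det(q_G(-B)), where q_G(-B) is the m × m matrix obtained by evaluating the polynomial q_G at the matrix -B. -/

import Mathlib

/-!
Indexing vertices of `G □ H` by pairs, the adjacency matrix is an `n × n` block matrix with
`m × m` blocks `A i j • 1 + δ i j • B`. These are the images of the entries of `A - X • 1` under
the evaluation homomorphism `ℝ[X] → Matrix (Fin m) (Fin m) ℝ` at `-B`, so all blocks commute and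
Silvester's theorem on determinants of block matrices (`Matrix.det_det`) gives the claim.
-/

open Polynomial

instance {α β : Type*} (G : SimpleGraph α) (H : SimpleGraph β)
    [DecidableRel G.Adj] [DecidableRel H.Adj]
    [DecidableEq α] [DecidableEq β] :
    DecidableRel (G.boxProd H).Adj :=
  fun _ _ => decidable_of_iff _ SimpleGraph.boxProd_adj.symm

/-- If `G` is a graph on `n` vertices with adjacency matrix `A`, `H` a graph on
`m` vertices with adjacency matrix `B`, and `q_G(x) = det(A - x·I)`, then
`det(A(G □ H)) = det(q_G(-B))`. -/
theorem det_adjMatrix_boxProd (n m : ℕ)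
    (G : SimpleGraph (Fin n)) (H : SimpleGraph (Fin m))
    [DecidableRel G.Adj] [DecidableRel H.Adj] :
    Matrix.det ((G.boxProd H).adjMatrix ℝ)
      = Matrix.det (Polynomial.aeval (-(H.adjMatrix ℝ))
          (Matrix.det ((G.adjMatrix ℝ).map Polynomial.C
            - (Polynomial.X : Polynomial ℝ) • 1))) := by
  have h := Matrix.det_det ((G.adjMatrix ℝ).map C - (X : ℝ[X]) • 1)
    (aeval (R := ℝ) (-(H.adjMatrix ℝ))).toRingHom
  refine Eq.trans ?_ h.symm
  congr 1
  ext ⟨i, k⟩ ⟨j, l⟩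
  by_cases hij : i = j
  · subst hij
    simp [SimpleGraph.boxProd_adj]
  · by_cases hkl : k = l <;>
      by_cases hG : G.Adj i j <;>
      simp [SimpleGraph.boxProd_adj, hij, hkl, hG]
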